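/- arXiv:1309.7162 — 2 statements merged into one kernel-verified Lean document; each statement's English description precedes it below -/
import Mathlib

section
/- Let X be a finite T0 topological space and let x ∈ X. An element y ∈ X satisfies y → x if and only if y is a closed point of the subspace ∂̃{x} = Ũ{x} \ {x}, i.e., y ∈ ∂̃{x} and the singleton {y} is closed in the subspace topology on ∂̃{x}. -/
/-- The smallest open subset of `X` containing `Y`. -/
def tildeU {X : Type*} [TopologicalSpace X] (Y : Set X) : Set X :=
  ⋂₀ {U : Set X | IsOpen U ∧ Y ⊆ U}

/-- `x ≤ y` : the closure of `{x}` is contained in the closure of `{y}`. -/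
def leSpec {X : Type*} [TopologicalSpace X] (x y : X) : Prop :=
  closure ({x} : Set X) ⊆ closure ({y} : Set X)

/-- `x < y` : `x ≤ y` and `x ≠ y`. -/
def ltSpec {X : Type*} [TopologicalSpace X] (x y : X) : Prop :=
  leSpec x y ∧ x ≠ y

/-- `y → x` : `x < y` and no `z` satisfies `x < z < y`. -/
def arrowTo {X : Type*} [TopologicalSpace X] (y x : X) : Prop :=
  ltSpec x y ∧ ¬ ∃ z : X, ltSpec x z ∧ ltSpec z y

theorem leSpec_iff_mem {X : Type*} [TopologicalSpace X] (x y : X) :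
    leSpec x y ↔ x ∈ closure ({y} : Set X) := by
  unfold leSpec
  rw [isClosed_closure.closure_subset_iff, Set.singleton_subset_iff]

theorem mem_tildeU_iff {X : Type*} [TopologicalSpace X] (x z : X) :
    z ∈ tildeU ({x} : Set X) ↔ leSpec x z := by
  rw [leSpec_iff_mem, ← specializes_iff_mem_closure, specializes_iff_forall_open]
  simp [tildeU]

/-- In a finite T0 space `X`, for `x, y ∈ X` one has `y → x` if and only if
`y` is a closed point of the subspace `∂̃{x} = Ũ{x} \ {x}`, i.e. `y ∈ ∂̃{x}` and the
singleton `{y}` is closed in the subspace topology on `∂̃{x}`. -/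
theorem arrowTo_iff_closed_point_of_boundary {X : Type*} [TopologicalSpace X] [Finite X]
    [T0Space X] (x y : X) :
    arrowTo y x ↔
      y ∈ tildeU ({x} : Set X) \ {x} ∧
      IsClosed {z : ↥(tildeU ({x} : Set X) \ {x}) | (z : X) = y} := by
  constructor
  · rintro ⟨⟨hxy, hne⟩, hno⟩
    refine ⟨⟨(mem_tildeU_iff x y).2 hxy, fun h => hne h.symm⟩, ?_⟩
    rw [isClosed_induced_iff]
    refine ⟨closure {y}, isClosed_closure, ?_⟩
    ext ⟨z, hz, hzx⟩
    simp only [Set.mem_preimage, Set.mem_setOf_eq]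
    constructor
    · intro h
      by_contra hzy
      exact hno ⟨z, ⟨(mem_tildeU_iff x z).1 hz, fun h => hzx h.symm⟩,
        (leSpec_iff_mem z y).2 h, hzy⟩
    · rintro rfl
      exact subset_closure rfl
  · rintro ⟨⟨hy, hyx⟩, hc⟩
    refine ⟨⟨(mem_tildeU_iff x y).1 hy, fun h => hyx h.symm⟩, ?_⟩
    rintro ⟨z, ⟨hxz, hne⟩, hzy, hzy'⟩
    obtain ⟨t, ht, hs⟩ := isClosed_induced_iff.1 hc
    have hyt : y ∈ t := by
      have : (⟨y, hy, hyx⟩ : ↥(tildeU ({x} : Set X) \ {x})) ∈ Subtype.val ⁻¹' t := by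
        rw [hs]; rfl
      exact this
    have hzt : z ∈ t :=
      closure_minimal (Set.singleton_subset_iff.2 hyt) ht ((leSpec_iff_mem z y).1 hzy)
    have hz : (⟨z, (mem_tildeU_iff x z).2 hxz, fun h => hne h.symm⟩ :
        ↥(tildeU ({x} : Set X) \ {x})) ∈ Subtype.val ⁻¹' t := hzt
    rw [hs] at hz
    exact hzy' hz
end

section
/- Let G1, G2, G3, F1, F2, F3 be abelian groups with F1, F2, F3 free, together with homomorphisms ε: G1 → G2, γ: G2 → G3, ε': F1 → F2, γ': F2 → F3, δ: F3 → G1 such that the cyclic six-term sequence G1 →ε G2 →γ G3 →0 F1 →ε' F2 →γ' F3 →δ G1 (the map G3 → F1 being the zero map) is exact at every term. Suppose there exist countable nonempty index sets I, I', J, J', row-finite matrices A ∈ M_{I×I'}(ℤ) and B ∈ M_{J×J'}(ℤ), and isomorphisms α1: coker A → G1, β1: ker A → F1, α3: coker B → G3, β3: ker B → F3. Then there exist a row-finite matrix Y ∈ M_{J×I'}(ℤ) and isomorphisms α2: coker M → G2 and β2: ker M → F2, where M = (A 0; Y B) is the block matrix, such that the tuple (α1, α2, α3, β1, β2, β3)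 is an isomorphism of cyclic complexes from the exact sequence coker A →I coker M →P coker B →0 ker A →I' ker M →P' ker B →[Y] coker A to the given sequence (i.e., all six squares commute: I∘α2 matches α1∘ε, etc.), where I, I' are induced by the inclusion ℤ^{(I)} → ℤ^{(I⊔J)}, P, P' are induced by the projections ℤ^{(I'⊔J')} → ℤ^{(J')} and ℤ^{(I⊔J)} → ℤ^{(J)} respectively, and [Y] sends v ∈ ker B to the class of vY in coker A. -/
/-- An integer matrix `D ∈ M_{S×T}(ℤ)` (a function `S × T → ℤ`) is *row-finite* if each
of its rows has only finitely many nonzero entries. -/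
def RowFinite {S T : Type*} (D : S → T → ℤ) : Prop :=
  ∀ s : S, {t : T | D s t ≠ 0}.Finite

/-- The `s`-th row of a row-finite matrix, as a finitely supported vector. -/
noncomputable def rowFinsupp {S T : Type*} {D : S → T → ℤ} (hD : RowFinite D) (s : S) :
    T →₀ ℤ :=
  ⟨(hD s).toFinset, D s, fun _ => (hD s).mem_toFinset⟩

/-- The homomorphism `ℤ^(S) → ℤ^(T)`, `v ↦ v·D`, given by the right action of a
row-finite matrix `D` on finitely supported vectors: `(v·D)(t) = Σ_s v(s)·D(s,t)`. -/
noncomputable def matHom {S T : Type*} {D : S → T → ℤ} (hD : RowFinite D) :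
    (S →₀ ℤ) →ₗ[ℤ] (T →₀ ℤ) :=
  Finsupp.lsum ℤ fun s => LinearMap.toSpanSingleton ℤ (T →₀ ℤ) (rowFinsupp hD s)

/-- The block matrix `(A 0; Y B)`. -/
def blockMat {I I' J J' : Type*} (A : I → I' → ℤ) (B : J → J' → ℤ) (Y : J → I' → ℤ) :
    I ⊕ J → I' ⊕ J' → ℤ
  | Sum.inl i, Sum.inl i' => A i i'
  | Sum.inl _, Sum.inr _ => 0
  | Sum.inr j, Sum.inl i' => Y j i'
  | Sum.inr j, Sum.inr j' => B j j'

/-- The block matrix of row-finite matrices is row-finite. -/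
theorem blockMat_rowFinite {I I' J J' : Type*} {A : I → I' → ℤ} {B : J → J' → ℤ}
    {Y : J → I' → ℤ} (hA : RowFinite A) (hB : RowFinite B) (hY : RowFinite Y) :
    RowFinite (blockMat A B Y) := by
  rintro (i | j)
  · apply Set.Finite.subset ((hA i).image Sum.inl)
    rintro (i' | j') ht
    · exact ⟨i', ht, rfl⟩
    · exact absurd rfl ht
  · apply Set.Finite.subset (((hY j).image Sum.inl).union ((hB j).image Sum.inr))
    rintro (i' | j') ht
    · exact Or.inl ⟨i', ht, rfl⟩
    · exact Or.inr ⟨j', ht, rfl⟩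

/-- Projection `ℤ^(α⊔β) → ℤ^(β)` forgetting the `α`-coordinates. -/
noncomputable def projR {α β : Type*} (w : α ⊕ β →₀ ℤ) : β →₀ ℤ :=
  (Finsupp.sumFinsuppAddEquivProdFinsupp w).2

/-- `RealizesSixTerm ε γ ε' γ' δ hA hB α1 β1 α3 β3 Y hY` says: there are isomorphisms
`α2 : coker (A 0; Y B) ≃ G2` and `β2 : ker (A 0; Y B) ≃ F2` such that
`(α1, α2, α3, β1, β2, β3)` is an isomorphism of cyclic complexes from the six-term
sequence `coker A →I coker M →P coker B →0 ker A →I' ker M →P' ker B →[Y] coker A`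
(maps induced by the inclusions/projections of `ℤ^(I⊔J)` and `ℤ^(I'⊔J')`, and
`[Y] v = [v·Y]`) to the sequence `G1 →ε G2 →γ G3 →0 F1 →ε' F2 →γ' F3 →δ G1`. -/
def RealizesSixTerm {I I' J J' : Type*} {G1 G2 G3 F1 F2 F3 : Type*}
    [AddCommGroup G1] [AddCommGroup G2] [AddCommGroup G3]
    [AddCommGroup F1] [AddCommGroup F2] [AddCommGroup F3]
    (ε : G1 →+ G2) (γ : G2 →+ G3) (ε' : F1 →+ F2) (γ' : F2 →+ F3) (δ : F3 →+ G1)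
    {A : I → I' → ℤ} {B : J → J' → ℤ} (hA : RowFinite A) (hB : RowFinite B)
    (α1 : ((I' →₀ ℤ) ⧸ LinearMap.range (matHom hA)) ≃+ G1)
    (β1 : ↥(LinearMap.ker (matHom hA)) ≃+ F1)
    (α3 : ((J' →₀ ℤ) ⧸ LinearMap.range (matHom hB)) ≃+ G3)
    (β3 : ↥(LinearMap.ker (matHom hB)) ≃+ F3)
    (Y : J → I' → ℤ) (hY : RowFinite Y) : Prop :=
  ∃ (α2 : ((I' ⊕ J' →₀ ℤ) ⧸
      LinearMap.range (matHom (blockMat_rowFinite hA hB hY))) ≃+ G2)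
    (β2 : ↥(LinearMap.ker (matHom (blockMat_rowFinite hA hB hY))) ≃+ F2),
    -- the matrix-side maps are well defined:
    (∀ v : ↥(LinearMap.ker (matHom hA)),
      matHom (blockMat_rowFinite hA hB hY) (Finsupp.mapDomain Sum.inl (v : I →₀ ℤ)) = 0) ∧
    (∀ w : ↥(LinearMap.ker (matHom (blockMat_rowFinite hA hB hY))),
      matHom hB (projR (w : I ⊕ J →₀ ℤ)) = 0) ∧
    (∀ v : I →₀ ℤ, ∃ w : I ⊕ J →₀ ℤ,
      matHom (blockMat_rowFinite hA hB hY) w = Finsupp.mapDomain Sum.inl (matHom hA v)) ∧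
    (∀ w : I ⊕ J →₀ ℤ, ∃ v : J →₀ ℤ,
      matHom hB v = projR (matHom (blockMat_rowFinite hA hB hY) w)) ∧
    -- the square for `I : coker A → coker M` against `ε : G1 → G2`
    (∀ u : I' →₀ ℤ,
      α2 (Submodule.Quotient.mk (Finsupp.mapDomain Sum.inl u)) =
        ε (α1 (Submodule.Quotient.mk u))) ∧
    -- the square for `P : coker M → coker B` against `γ : G2 → G3`
    (∀ w' : I' ⊕ J' →₀ ℤ,
      α3 (Submodule.Quotient.mk (projR w')) = γ (α2 (Submodule.Quotient.mk w'))) ∧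
    -- the square for `I' : ker A → ker M` against `ε' : F1 → F2`
    (∀ (v : ↥(LinearMap.ker (matHom hA)))
        (w : ↥(LinearMap.ker (matHom (blockMat_rowFinite hA hB hY)))),
      (w : I ⊕ J →₀ ℤ) = Finsupp.mapDomain Sum.inl (v : I →₀ ℤ) →
      β2 w = ε' (β1 v)) ∧
    -- the square for `P' : ker M → ker B` against `γ' : F2 → F3`
    (∀ (w : ↥(LinearMap.ker (matHom (blockMat_rowFinite hA hB hY))))
        (v : ↥(LinearMap.ker (matHom hB))),
      (v : J →₀ ℤ) = projR (w : I ⊕ J →₀ ℤ) →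
      β3 v = γ' (β2 w)) ∧
    -- the square for `[Y] : ker B → coker A` against `δ : F3 → G1`
    (∀ v : ↥(LinearMap.ker (matHom hB)),
      α1 (Submodule.Quotient.mk (matHom hY (v : J →₀ ℤ))) = δ (β3 v))

theorem free_of_inj_nat {Λ : Type*} [CommRing Λ] [IsDomain Λ] [IsPrincipalIdealRing Λ]
    {P : Type*} [AddCommGroup P] [Module Λ P] (f : P →ₗ[Λ] (ℕ →₀ Λ))
    (hf : Function.Injective f) : Module.Free Λ P := by
  let Nk : ℕ → Submodule Λ P := fun k =>
    { carrier := {x | ∀ j, k < j → f x j = 0}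
      add_mem' := fun {x y} hx hy j hj => by
        rw [map_add, Finsupp.add_apply, hx j hj, hy j hj, add_zero]
      zero_mem' := fun _ _ => by rw [map_zero]; rfl
      smul_mem' := fun c x hx j hj => by
        rw [map_smul, Finsupp.smul_apply, hx j hj, smul_zero] }
  have key : ∀ k, ∃ n : P, (∀ j, k < j → f n j = 0) ∧
      ∀ x : P, (∀ j, k < j → f x j = 0) → ∃ c, f x k = c * f n k := by
    intro k
    let φ : P →ₗ[Λ] Λ := Finsupp.lapply k ∘ₗ f
    obtain ⟨a, ha⟩ := (IsPrincipalIdealRing.principal ((Nk k).map φ))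
    have h1 : a ∈ (Nk k).map φ := by
      rw [ha]; exact Submodule.mem_span_singleton_self a
    obtain ⟨n, hn, hna⟩ := h1
    refine ⟨n, hn, fun x hx => ?_⟩
    have h2 : f x k ∈ (Nk k).map φ := ⟨x, hx, rfl⟩
    rw [ha, Submodule.mem_span_singleton] at h2
    obtain ⟨c, hc⟩ := h2
    refine ⟨c, ?_⟩
    rw [← hc, ← hna]
    rfl
  choose n hn0 hn using key
  let T := {k : ℕ // f (n k) k ≠ 0}
  let v : T → P := fun k => n k
  have hli : LinearIndependent Λ v := by
    rw [linearIndependent_iff]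
    intro l hl
    by_contra hne
    have hs : l.support.Nonempty := Finsupp.support_nonempty_iff.2 hne
    obtain ⟨k, hk, hmax⟩ := l.support.exists_max_image (fun k : T => (k : ℕ)) hs
    have h1 : f (Finsupp.linearCombination Λ v l) k = 0 := by rw [hl, map_zero]; rfl
    rw [Finsupp.linearCombination_apply, Finsupp.sum, map_sum,
      Finsupp.finsetSum_apply, Finset.sum_eq_single k] at h1
    · rw [map_smul, Finsupp.smul_apply, smul_eq_mul] at h1
      exact (mul_ne_zero (Finsupp.mem_support_iff.1 hk) k.2) h1
    · intro j hj hjk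
      have hlt : (j : ℕ) < k := lt_of_le_of_ne (hmax j hj) (fun h => hjk (Subtype.ext h))
      rw [map_smul, Finsupp.smul_apply, hn0 j k hlt, smul_zero]
    · intro h
      exact absurd hk h
  have hsp : ∀ k, ∀ x : P, (∀ j, k ≤ j → f x j = 0) →
      x ∈ Submodule.span Λ (Set.range v) := by
    intro k
    induction k with
    | zero =>
      intro x hx
      have : x = 0 := by
        apply hf
        rw [map_zero]
        ext j
        exact hx j (Nat.zero_le j)
      rw [this]
      exact Submodule.zero_mem _
    | succ k ih =>
      intro x hx
      obtain ⟨c, hc⟩ := hn k x (fun j hj => hx j hj)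
      by_cases h0 : f (n k) k = 0
      · apply ih
        intro j hj
        rcases hj.eq_or_lt with rfl | hj
        · rw [hc, h0, mul_zero]
        · exact hx j hj
      · have h1 : x - c • n k ∈ Submodule.span Λ (Set.range v) := by
          apply ih
          intro j hj
          rw [map_sub, map_smul, Finsupp.sub_apply, Finsupp.smul_apply, smul_eq_mul]
          rcases hj.eq_or_lt with rfl | hj
          · rw [hc, sub_self]
          · rw [hx j hj, hn0 k j hj, mul_zero, sub_zero]
        have h2 := Submodule.add_mem _ h1
          (Submodule.smul_mem _ c (Submodule.subset_span ⟨⟨k, h0⟩, rfl⟩))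
        rwa [sub_add_cancel] at h2
  refine Module.Free.of_basis (Module.Basis.mk hli ?_)
  intro x _
  apply hsp ((f x).support.sup id + 1)
  intro j hj
  by_contra h
  have := Finset.le_sup (f := id) (Finsupp.mem_support_iff.2 h)
  simp only [id] at this
  omega

theorem free_of_inj {Λ : Type*} [CommRing Λ] [IsDomain Λ] [IsPrincipalIdealRing Λ]
    {ι P : Type*} [Countable ι] [AddCommGroup P] [Module Λ P] (f : P →ₗ[Λ] (ι →₀ Λ))
    (hf : Function.Injective f) : Module.Projective Λ P := by
  obtain ⟨g, hg⟩ := exists_injective_nat ι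
  have : Module.Free Λ P := free_of_inj_nat (Finsupp.lmapDomain Λ Λ g ∘ₗ f)
    ((Finsupp.mapDomain_injective hg).comp hf)
  infer_instance

theorem ses_iso {Λ : Type*} [CommRing Λ] {K1 K2 F2 N : Type*} [AddCommGroup K1] [AddCommGroup K2] [AddCommGroup F2]
    [AddCommGroup N] [Module Λ K1] [Module Λ K2] [Module Λ F2] [Module Λ N]
    [Module.Projective Λ N]
    (i : K1 →ₗ[Λ] K2) (p : K2 →ₗ[Λ] N) (i' : K1 →ₗ[Λ] F2) (p' : F2 →ₗ[Λ] N)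
    (hi : Function.Injective i) (hi' : Function.Injective i')
    (hp : Function.Surjective p) (hp' : Function.Surjective p')
    (h : Function.Exact i p) (h' : Function.Exact i' p') :
    ∃ e : K2 ≃ₗ[Λ] F2, (∀ k, e (i k) = i' k) ∧ ∀ w, p' (e w) = p w := by
  obtain ⟨l, hl⟩ := Module.projective_lifting_property p LinearMap.id hp
  obtain ⟨l', hl'⟩ := Module.projective_lifting_property p' LinearMap.id hp'
  obtain ⟨E, hE1, hE2⟩ := h.splitSurjectiveEquiv hi ⟨l, hl⟩
  obtain ⟨E', hE1', hE2'⟩ := h'.splitSurjectiveEquiv hi' ⟨l', hl'⟩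
  refine ⟨E.trans E'.symm, ?_, ?_⟩
  · intro k
    rw [hE1, hE1']
    simp
  · intro w
    rw [hE2, hE2']
    simp

theorem exists_Y {Λ : Type*} [CommRing Λ] {Q R S G1 G2 G3 : Type*} [AddCommGroup Q] [AddCommGroup R] [AddCommGroup S]
    [AddCommGroup G1] [AddCommGroup G2] [AddCommGroup G3]
    [Module Λ Q] [Module Λ R] [Module Λ S] [Module Λ G1] [Module Λ G2] [Module Λ G3]
    [Module.Free Λ R] [Module.Free Λ S]
    (q : Q →ₗ[Λ] G1) (hq : Function.Surjective q) (b : R →ₗ[Λ] S) (p : S →ₗ[Λ] G3)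
    (hbp : ∀ x, p (b x) = 0) [Module.Projective Λ (LinearMap.range b)]
    (ε : G1 →ₗ[Λ] G2) (γ : G2 →ₗ[Λ] G3) (hγ : Function.Surjective γ)
    (hex : Function.Exact ε γ) (d : LinearMap.ker b →ₗ[Λ] G1) (hd : ∀ k, ε (d k) = 0) :
    ∃ (s : S →ₗ[Λ] G2) (Y : R →ₗ[Λ] Q), (∀ x, γ (s x) = p x) ∧
      (∀ x, ε (q (Y x)) + s (b x) = 0) ∧ ∀ k : LinearMap.ker b, q (Y k) = d k := by
  obtain ⟨s, hs⟩ := Module.projective_lifting_property γ p hγ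
  have hs' : ∀ x, γ (s x) = p x := fun x => LinearMap.congr_fun hs x
  obtain ⟨l, hl⟩ := Module.projective_lifting_property b.rangeRestrict LinearMap.id
    b.surjective_rangeRestrict
  have hl' : ∀ x, b (l x) = x := fun x => congrArg Subtype.val (LinearMap.congr_fun hl x)
  obtain ⟨f, hf⟩ := Module.projective_lifting_property ε.rangeRestrict
    (LinearMap.codRestrict (LinearMap.range ε) (-(s ∘ₗ (LinearMap.range b).subtype)) (by
      rintro ⟨_, x, rfl⟩
      have : γ (-(s (b x))) = 0 := by rw [map_neg, hs', hbp, neg_zero]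
      obtain ⟨g, hg⟩ := (hex _).1 this
      exact ⟨g, hg⟩)) ε.surjective_rangeRestrict
  have hf' : ∀ x, ε (f x) = - s x := fun x => congrArg Subtype.val (LinearMap.congr_fun hf x)
  let π : R →ₗ[Λ] LinearMap.ker b := LinearMap.codRestrict (LinearMap.ker b)
    (LinearMap.id - l ∘ₗ b.rangeRestrict) (by
      intro x
      simp [LinearMap.mem_ker, hl'])
  obtain ⟨Y, hY⟩ := Module.projective_lifting_property q (f ∘ₗ b.rangeRestrict + d ∘ₗ π) hq
  have hY' : ∀ x, q (Y x) = f (b.rangeRestrict x) + d (π x) := fun x => LinearMap.congr_fun hY x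
  refine ⟨s, Y, hs', ?_, ?_⟩
  · intro x
    rw [hY', map_add, hf', hd]
    simp
  · intro k
    have h0 : b.rangeRestrict (k : R) = 0 := Subtype.ext k.2
    have h1 : π k = k := by
      apply Subtype.ext
      simp [π, h0]
    rw [hY', h0, h1, map_zero, zero_add]

theorem rowFinite_of_lin {S T : Type*} (Y : (S →₀ ℤ) →ₗ[ℤ] (T →₀ ℤ)) :
    RowFinite (fun s t => Y (Finsupp.single s 1) t) := by
  intro s
  exact (Y (Finsupp.single s 1)).hasFiniteSupport

theorem matHom_single {S T : Type*} {D : S → T → ℤ} (hD : RowFinite D) (s : S) :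
    matHom hD (Finsupp.single s 1) = rowFinsupp hD s := by
  simp [matHom]

theorem matHom_of_lin {S T : Type*} (Y : (S →₀ ℤ) →ₗ[ℤ] (T →₀ ℤ)) :
    matHom (rowFinite_of_lin Y) = Y := by
  ext s t
  simp [matHom_single, rowFinsupp]

/-- left projection -/
noncomputable def plL (α β : Type*) : (α ⊕ β →₀ ℤ) →ₗ[ℤ] (α →₀ ℤ) :=
  LinearMap.fst ℤ _ _ ∘ₗ (Finsupp.sumFinsuppLEquivProdFinsupp ℤ).toLinearMap

/-- right projection -/
noncomputable def prL (α β : Type*) : (α ⊕ β →₀ ℤ) →ₗ[ℤ] (β →₀ ℤ) :=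
  LinearMap.snd ℤ _ _ ∘ₗ (Finsupp.sumFinsuppLEquivProdFinsupp ℤ).toLinearMap

theorem projR_eq {α β : Type*} (w : α ⊕ β →₀ ℤ) : projR w = prL α β w := rfl

theorem plL_apply {α β : Type*} (w : α ⊕ β →₀ ℤ) (x : α) : plL α β w x = w (Sum.inl x) := rfl

theorem prL_apply {α β : Type*} (w : α ⊕ β →₀ ℤ) (x : β) : prL α β w x = w (Sum.inr x) := rfl

theorem plL_inl {α β : Type*} (u : α →₀ ℤ) :
    plL α β (Finsupp.mapDomain Sum.inl u) = u := by
  ext x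
  rw [plL_apply, Finsupp.mapDomain_apply Sum.inl_injective]

theorem prL_inr {α β : Type*} (u : β →₀ ℤ) :
    prL α β (Finsupp.mapDomain Sum.inr u) = u := by
  ext x
  rw [prL_apply, Finsupp.mapDomain_apply Sum.inr_injective]

theorem prL_inl {α β : Type*} (u : α →₀ ℤ) :
    prL α β (Finsupp.mapDomain Sum.inl u) = 0 := by
  ext x
  rw [prL_apply, Finsupp.mapDomain_of_notMem_range]
  · rfl
  · simp

theorem plL_inr {α β : Type*} (u : β →₀ ℤ) :
    plL α β (Finsupp.mapDomain Sum.inr u) = 0 := by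
  ext x
  rw [plL_apply, Finsupp.mapDomain_of_notMem_range]
  · rfl
  · simp

theorem plL_add {α β : Type*} (u : α →₀ ℤ) (v : β →₀ ℤ) :
    plL α β (Finsupp.mapDomain Sum.inl u + Finsupp.mapDomain Sum.inr v) = u := by
  rw [map_add, plL_inl, plL_inr, add_zero]

theorem prL_add {α β : Type*} (u : α →₀ ℤ) (v : β →₀ ℤ) :
    prL α β (Finsupp.mapDomain Sum.inl u + Finsupp.mapDomain Sum.inr v) = v := by
  rw [map_add, prL_inl, prL_inr, zero_add]

theorem sum_ext {α β : Type*} {w w' : α ⊕ β →₀ ℤ} (h1 : plL α β w = plL α β w')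
    (h2 : prL α β w = prL α β w') : w = w' := by
  ext (x | x)
  · exact DFunLike.congr_fun h1 x
  · exact DFunLike.congr_fun h2 x

theorem block_pl {I I' J J' : Type*} {A : I → I' → ℤ} {B : J → J' → ℤ}
    {Y : J → I' → ℤ} (hA : RowFinite A) (hB : RowFinite B) (hY : RowFinite Y)
    (w : I ⊕ J →₀ ℤ) : plL I' J' (matHom (blockMat_rowFinite hA hB hY) w) =
      matHom hA (plL I J w) + matHom hY (prL I J w) := by
  suffices h : plL I' J' ∘ₗ matHom (blockMat_rowFinite hA hB hY) =
      matHom hA ∘ₗ plL I J + matHom hY ∘ₗ prL I J from LinearMap.congr_fun h w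
  have e1 : ∀ i : I, (Finsupp.single (Sum.inl i) 1 : I ⊕ J →₀ ℤ) =
    Finsupp.mapDomain Sum.inl (Finsupp.single i 1) := fun i => by simp
  have e2 : ∀ i : J, (Finsupp.single (Sum.inr i) 1 : I ⊕ J →₀ ℤ) =
    Finsupp.mapDomain Sum.inr (Finsupp.single i 1) := fun i => by simp
  ext (i | j) t
  · simp only [LinearMap.comp_apply, LinearMap.add_apply, Finsupp.lsingle_apply, matHom_single,
      plL_apply]
    rw [e1, plL_inl, prL_inl, map_zero, add_zero, matHom_single]
    rfl
  · simp only [LinearMap.comp_apply, LinearMap.add_apply, Finsupp.lsingle_apply, matHom_single,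
      plL_apply]
    rw [e2, plL_inr, prL_inr, map_zero, zero_add, matHom_single]
    rfl

theorem block_pr {I I' J J' : Type*} {A : I → I' → ℤ} {B : J → J' → ℤ}
    {Y : J → I' → ℤ} (hA : RowFinite A) (hB : RowFinite B) (hY : RowFinite Y)
    (w : I ⊕ J →₀ ℤ) : prL I' J' (matHom (blockMat_rowFinite hA hB hY) w) =
      matHom hB (prL I J w) := by
  suffices h : prL I' J' ∘ₗ matHom (blockMat_rowFinite hA hB hY) =
      matHom hB ∘ₗ prL I J from LinearMap.congr_fun h w
  have e1 : ∀ i : I, (Finsupp.single (Sum.inl i) 1 : I ⊕ J →₀ ℤ) =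
    Finsupp.mapDomain Sum.inl (Finsupp.single i 1) := fun i => by simp
  have e2 : ∀ i : J, (Finsupp.single (Sum.inr i) 1 : I ⊕ J →₀ ℤ) =
    Finsupp.mapDomain Sum.inr (Finsupp.single i 1) := fun i => by simp
  ext (i | j) t
  · simp only [LinearMap.comp_apply, Finsupp.lsingle_apply, matHom_single, prL_apply]
    rw [e1, prL_inl, map_zero]
    rfl
  · simp only [LinearMap.comp_apply, Finsupp.lsingle_apply, matHom_single, prL_apply]
    rw [e2, prL_inr, matHom_single]
    rfl

/-- Given an exact cyclic six-term sequence
`G1 →ε G2 →γ G3 →0 F1 →ε' F2 →γ' F3 →δ G1` of abelian groups with `F1, F2, F3` free,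
realized at the ends by row-finite matrices `A ∈ M_{I×I'}(ℤ)`, `B ∈ M_{J×J'}(ℤ)`
(over countable nonempty index sets) via isomorphisms `α1 : coker A ≅ G1`,
`β1 : ker A ≅ F1`, `α3 : coker B ≅ G3`, `β3 : ker B ≅ F3`, there exist a row-finite
matrix `Y ∈ M_{J×I'}(ℤ)` and isomorphisms `α2 : coker (A 0; Y B) ≅ G2`,
`β2 : ker (A 0; Y B) ≅ F2` making `(α1, α2, α3, β1, β2, β3)` an isomorphism of cyclic
complexes from the six-term sequence of the block matrix to the given sequence. -/
theorem six_term_realization {I I' J J' : Type*}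
    [Countable I] [Countable I'] [Countable J] [Countable J']
    [Nonempty I] [Nonempty I'] [Nonempty J] [Nonempty J']
    {G1 G2 G3 F1 F2 F3 : Type*}
    [AddCommGroup G1] [AddCommGroup G2] [AddCommGroup G3]
    [AddCommGroup F1] [AddCommGroup F2] [AddCommGroup F3]
    (hF1 : Module.Free ℤ F1) (hF2 : Module.Free ℤ F2) (hF3 : Module.Free ℤ F3)
    (ε : G1 →+ G2) (γ : G2 →+ G3) (ε' : F1 →+ F2) (γ' : F2 →+ F3) (δ : F3 →+ G1)
    (hexG2 : Function.Exact ⇑ε ⇑γ)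
    (hexG3 : Function.Exact ⇑γ (fun _ : G3 => (0 : F1)))
    (hexF1 : Function.Exact (fun _ : G3 => (0 : F1)) ⇑ε')
    (hexF2 : Function.Exact ⇑ε' ⇑γ')
    (hexF3 : Function.Exact ⇑γ' ⇑δ)
    (hexG1 : Function.Exact ⇑δ ⇑ε)
    {A : I → I' → ℤ} {B : J → J' → ℤ} (hA : RowFinite A) (hB : RowFinite B)
    (α1 : ((I' →₀ ℤ) ⧸ LinearMap.range (matHom hA)) ≃+ G1)
    (β1 : ↥(LinearMap.ker (matHom hA)) ≃+ F1)
    (α3 : ((J' →₀ ℤ) ⧸ LinearMap.range (matHom hB)) ≃+ G3)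
    (β3 : ↥(LinearMap.ker (matHom hB)) ≃+ F3) :
    ∃ (Y : J → I' → ℤ) (hY : RowFinite Y),
      RealizesSixTerm ε γ ε' γ' δ hA hB α1 β1 α3 β3 Y hY := by
  have hγ : Function.Surjective γ := fun x => (hexG3 x).1 rfl
  have hε' : Function.Injective ε' := by
    rw [injective_iff_map_eq_zero]
    intro x hx
    obtain ⟨_, h⟩ := (hexF1 x).1 hx
    exact h.symm
  let q : (I' →₀ ℤ) →ₗ[ℤ] G1 :=
    α1.toIntLinearEquiv.toLinearMap ∘ₗ (LinearMap.range (matHom hA)).mkQ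
  let p : (J' →₀ ℤ) →ₗ[ℤ] G3 :=
    α3.toIntLinearEquiv.toLinearMap ∘ₗ (LinearMap.range (matHom hB)).mkQ
  let d : LinearMap.ker (matHom hB) →ₗ[ℤ] G1 :=
    δ.toIntLinearMap ∘ₗ β3.toIntLinearEquiv.toLinearMap
  have hqv : ∀ u, q u = α1 (Submodule.Quotient.mk u) := fun u => rfl
  have hpv : ∀ u, p u = α3 (Submodule.Quotient.mk u) := fun u => rfl
  have hdv : ∀ u, d u = δ (β3 u) := fun u => rfl
  have hq : Function.Surjective q :=
    α1.surjective.comp (Submodule.mkQ_surjective _)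
  have hq0 : ∀ u, q u = 0 ↔ ∃ v, matHom hA v = u := fun u => by
    rw [hqv, EmbeddingLike.map_eq_zero_iff, Submodule.Quotient.mk_eq_zero, LinearMap.mem_range]
  have hp0 : ∀ u, p u = 0 ↔ ∃ v, matHom hB v = u := fun u => by
    rw [hpv, EmbeddingLike.map_eq_zero_iff, Submodule.Quotient.mk_eq_zero, LinearMap.mem_range]
  have hp : Function.Surjective p :=
    α3.surjective.comp (Submodule.mkQ_surjective _)
  have hproj : Module.Projective ℤ (LinearMap.range (matHom hB)) :=
    free_of_inj (LinearMap.range (matHom hB)).subtype Subtype.val_injective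
  obtain ⟨s, Yl, hs, hYs, hYd⟩ := exists_Y q hq (matHom hB) p (fun x => (hp0 _).2 ⟨x, rfl⟩)
    ε.toIntLinearMap γ.toIntLinearMap hγ hexG2 d (fun k => (hexG1 _).2 ⟨β3 k, rfl⟩)
  simp only [AddMonoidHom.coe_toIntLinearMap] at hs hYs
  refine ⟨_, rowFinite_of_lin Yl, ?_⟩
  set hY := rowFinite_of_lin Yl with hYdef
  have hYm : matHom hY = Yl := matHom_of_lin Yl
  set M := matHom (blockMat_rowFinite hA hB hY) with hM
  have Ml : ∀ w, plL I' J' (M w) = matHom hA (plL I J w) + Yl (prL I J w) := fun w => by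
    rw [hM, block_pl hA hB hY, hYm]
  have Mr : ∀ w, prL I' J' (M w) = matHom hB (prL I J w) := fun w => by
    rw [hM, block_pr hA hB hY]
  -- cokernel
  let f : (I' ⊕ J' →₀ ℤ) →ₗ[ℤ] G2 :=
    ε.toIntLinearMap ∘ₗ q ∘ₗ plL I' J' + s ∘ₗ prL I' J'
  have hf : ∀ w, f w = ε (q (plL I' J' w)) + s (prL I' J' w) := fun w => rfl
  have hγε : ∀ x, γ (ε x) = 0 := fun x => (hexG2 _).2 ⟨x, rfl⟩
  have hγf : ∀ w, γ (f w) = p (prL I' J' w) := fun w => by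
    rw [hf, map_add, hγε, hs, zero_add]
  have hfs : Function.Surjective f := by
    intro g
    obtain ⟨u, hu⟩ := hp (γ g)
    have : γ (g - s u) = 0 := by rw [map_sub, hs, hu, sub_self]
    obtain ⟨x, hx⟩ := (hexG2 _).1 this
    obtain ⟨v, rfl⟩ := hq x
    refine ⟨Finsupp.mapDomain Sum.inl v + Finsupp.mapDomain Sum.inr u, ?_⟩
    rw [hf, plL_add, prL_add, hx]
    abel
  have hfk : LinearMap.range M = LinearMap.ker f := by
    apply le_antisymm
    · rintro _ ⟨w, rfl⟩
      rw [LinearMap.mem_ker, hf, Ml, Mr, map_add, (hq0 _).2 ⟨_, rfl⟩, zero_add, hYs]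
    · intro w hw
      rw [LinearMap.mem_ker] at hw
      have h1 : p (prL I' J' w) = 0 := by rw [← hγf, hw, map_zero]
      obtain ⟨x, hx⟩ := (hp0 _).1 h1
      rw [hf, ← hx] at hw
      have h2 : ε (q (plL I' J' w) - q (Yl x)) = 0 := by
        rw [map_sub, sub_eq_zero]
        exact add_right_cancel (hw.trans (hYs x).symm)
      obtain ⟨y, hy⟩ := (hexG1 _).1 h2
      obtain ⟨k, rfl⟩ := β3.surjective y
      rw [← hdv, ← hYd] at hy
      have h3 : q (plL I' J' w - Yl x - Yl k) = 0 := by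
        rw [map_sub, map_sub, hy, sub_self]
      obtain ⟨v, hv⟩ := (hq0 _).1 h3
      refine ⟨Finsupp.mapDomain Sum.inl v + Finsupp.mapDomain Sum.inr (x + (k : J →₀ ℤ)), sum_ext ?_ ?_⟩
      · rw [Ml, plL_add, prL_add, hv,
          map_add]
        abel
      · rw [Mr, prL_add, map_add, hx, LinearMap.mem_ker.1 k.2,
          add_zero]
  let α2 : ((I' ⊕ J' →₀ ℤ) ⧸ LinearMap.range M) ≃ₗ[ℤ] G2 :=
    (Submodule.quotEquivOfEq _ _ hfk).trans (f.quotKerEquivOfSurjective hfs)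
  have hα2 : ∀ w, α2 (Submodule.Quotient.mk w) = f w := fun w => rfl
  -- kernel
  have hMl : ∀ v, M (Finsupp.mapDomain Sum.inl v) = Finsupp.mapDomain Sum.inl (matHom hA v) := by
    intro v
    apply sum_ext
    · rw [Ml, plL_inl, prL_inl, plL_inl, map_zero, add_zero]
    · rw [Mr, prL_inl, prL_inl, map_zero]
  have hk1 : ∀ v : LinearMap.ker (matHom hA), M (Finsupp.mapDomain Sum.inl (v : I →₀ ℤ)) = 0 := by
    intro v
    rw [hMl, LinearMap.mem_ker.1 v.2, Finsupp.mapDomain_zero]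
  have hk2 : ∀ w : LinearMap.ker M, matHom hB (prL I J w) = 0 := by
    intro w
    rw [← Mr, LinearMap.mem_ker.1 w.2, map_zero]
  let i : LinearMap.ker (matHom hA) →ₗ[ℤ] LinearMap.ker M :=
    LinearMap.codRestrict _ (Finsupp.lmapDomain ℤ ℤ Sum.inl ∘ₗ (LinearMap.ker (matHom hA)).subtype)
      hk1
  have hi : ∀ v, (i v : I ⊕ J →₀ ℤ) = Finsupp.mapDomain Sum.inl (v : I →₀ ℤ) := fun v => rfl
  let P : LinearMap.ker M →ₗ[ℤ] LinearMap.ker (matHom hB) :=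
    LinearMap.codRestrict _ (prL I J ∘ₗ (LinearMap.ker M).subtype) hk2
  have hP : ∀ w, (P w : J →₀ ℤ) = prL I J w := fun w => rfl
  have hiinj : Function.Injective i := by
    intro v v' h
    apply Subtype.ext
    rw [← plL_inl (β := J) (v : I →₀ ℤ), ← hi, h, hi, plL_inl]
  have hPr : ∀ w, δ (β3 (P w)) = 0 := by
    intro w
    rw [← hdv, ← hYd, hP, hq0]
    have h1 := Ml w
    rw [LinearMap.mem_ker.1 w.2, map_zero] at h1
    exact ⟨-plL I J w, by rw [map_neg]; exact neg_eq_of_add_eq_zero_right h1.symm⟩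
  let γr := γ'.toIntLinearMap.rangeRestrict
  let pr : LinearMap.ker M →ₗ[ℤ] LinearMap.range γ'.toIntLinearMap :=
    LinearMap.codRestrict _ (β3.toIntLinearEquiv.toLinearMap ∘ₗ P) (fun w => by
      obtain ⟨y, hy⟩ := (hexF3 _).1 (hPr w)
      exact ⟨y, hy⟩)
  have hpr : ∀ w, (pr w : F3) = β3 (P w) := fun w => rfl
  have hγr : ∀ w, (γr w : F3) = γ' w := fun w => rfl
  have hproj2 : Module.Projective ℤ (LinearMap.range γ'.toIntLinearMap) :=
    free_of_inj ((LinearMap.ker (matHom hB)).subtype ∘ₗ β3.symm.toIntLinearEquiv.toLinearMap ∘ₗ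
      (LinearMap.range γ'.toIntLinearMap).subtype)
      (Subtype.val_injective.comp (β3.symm.injective.comp Subtype.val_injective))
  obtain ⟨e, he1, he2⟩ := ses_iso i pr (ε'.toIntLinearMap ∘ₗ β1.toIntLinearEquiv.toLinearMap) γr
    hiinj (hε'.comp β1.injective) (by
      rintro ⟨y, y', rfl⟩
      obtain ⟨k, hk⟩ := β3.surjective (γ' y')
      have h1 : q (Yl k) = 0 := by
        rw [hYd, hdv, hk]
        exact (hexF3 _).2 ⟨_, rfl⟩
      obtain ⟨v, hv⟩ := (hq0 _).1 h1
      refine ⟨⟨Finsupp.mapDomain Sum.inl (-v) + Finsupp.mapDomain Sum.inr k, ?_⟩, ?_⟩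
      · rw [LinearMap.mem_ker]
        apply sum_ext
        · rw [Ml, plL_add, prL_add,
            map_neg, hv, map_zero, neg_add_cancel]
        · rw [Mr, prL_add, LinearMap.mem_ker.1 k.2, map_zero]
      · apply Subtype.ext
        rw [hpr]
        refine Eq.trans ?_ hk
        congr 1
        apply Subtype.ext
        rw [hP, prL_add])
    γ'.toIntLinearMap.surjective_rangeRestrict (by
      intro w
      constructor
      · intro h
        have h1 : β3 (P w) = 0 := by rw [← hpr, h]; rfl
        rw [EmbeddingLike.map_eq_zero_iff] at h1
        have h2 : prL I J w = 0 := by rw [← hP, h1]; rfl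
        refine ⟨⟨plL I J w, ?_⟩, ?_⟩
        · have h3 := Ml w
          rw [LinearMap.mem_ker.1 w.2, map_zero, h2, map_zero, add_zero] at h3
          exact h3.symm
        · apply Subtype.ext
          rw [hi]
          apply sum_ext
          · rw [plL_inl]
          · rw [prL_inl, h2]
      · rintro ⟨v, rfl⟩
        apply Subtype.ext
        rw [hpr]
        have : P (i v) = 0 := by
          apply Subtype.ext
          rw [hP, hi, prL_inl]
          rfl
        rw [this, map_zero]
        rfl) (by
      intro w
      constructor
      · intro h
        have h1 : γ' w = 0 := by rw [← hγr, h]; rfl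
        obtain ⟨y, rfl⟩ := (hexF2 _).1 h1
        obtain ⟨v, rfl⟩ := β1.surjective y
        exact ⟨v, rfl⟩
      · rintro ⟨v, rfl⟩
        apply Subtype.ext
        exact (hexF2 _).2 ⟨_, rfl⟩)
  refine ⟨α2.toAddEquiv, e.toAddEquiv, hk1, hk2, ?_, ?_, ?_, ?_, ?_, ?_, ?_⟩
  · exact fun v => ⟨_, hMl v⟩
  · exact fun w => ⟨_, (Mr w).symm⟩
  · intro u
    change f (Finsupp.mapDomain Sum.inl u) = ε (q u)
    rw [hf, plL_inl, prL_inl, map_zero, add_zero]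
  · intro w
    exact (hγf w).symm
  · intro v w h
    have : w = i v := Subtype.ext h
    subst this
    exact he1 v
  · intro w v h
    have : v = P w := Subtype.ext h
    subst this
    exact (congrArg Subtype.val (he2 w)).symm
  · intro v
    rw [hYm]
    exact hYd v
end
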